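/- Let q > 0 and let x, a ∈ ℝ³ be nonzero with ρ(x,a) > 1. Then for each sign ι ∈ {+1, −1} the generating function S_ι satisfies the Hamilton–Jacobi (eikonal) identity |∇_x S_ι(x,a)|² = |a|² − q/|x|. -/

import Mathlib

/-!
Since `K'(s) = √(s-1)/√s`, the chain rule gives, with `e = x/|x|` and `k = √(ρ-1)/√ρ`,
`∇ₓ S_ι = (ι k / 2) (|a| e + a) - (1/2) (|a| e - a)`.
The vectors `|a| e + a` and `|a| e - a` are orthogonal because `|a| e` and `a` have the same
length, so only their squared lengths `2|a|² ± 2|a| e·a` matter. Inserting `k² = 1 - 1/ρ` and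
the definition of `ρ` leaves `|a|² - q/|x|`. The derivative of `K` is `hasDerivAt_KF` and the
formula for the gradient is `hasGradientAt_Sgen`.
-/

open scoped RealInnerProductSpace

noncomputable section

/-- Euclidean three-space. -/
abbrev R3 : Type := EuclideanSpace ℝ (Fin 3)

/-- `ρ(x,a) = (|a|/(2q))(|x||a| + x·a)`. -/
def rhoF (q : ℝ) (x a : R3) : ℝ := ‖a‖ / (2 * q) * (‖x‖ * ‖a‖ + ⟪x, a⟫)

/-- `K(s) = √(s(s−1)) − ln(√s + √(s−1))`. -/
def KF (s : ℝ) : ℝ := Real.sqrt (s * (s - 1)) - Real.log (Real.sqrt s + Real.sqrt (s - 1))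

/-- The generating function `S_ι(x,a) = ι·(q/|a|)·K(ρ(x,a)) − (|x||a| − x·a)/2`. -/
def Sgen (q ι : ℝ) (x a : R3) : ℝ :=
  ι * (q / ‖a‖) * KF (rhoF q x a) - (‖x‖ * ‖a‖ - ⟪x, a⟫) / 2

lemma hasDerivAt_KF {s : ℝ} (hs : 1 < s) :
    HasDerivAt KF (Real.sqrt (s - 1) / Real.sqrt s) s := by
  have h0 : 0 < s := by linarith
  have h1 : 0 < s - 1 := by linarith
  have hu : 0 < Real.sqrt s := Real.sqrt_pos.2 h0
  have hv : 0 < Real.sqrt (s - 1) := Real.sqrt_pos.2 h1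
  have hd : HasDerivAt (fun t : ℝ => t - 1) 1 s := (hasDerivAt_id s).sub_const 1
  have hm := ((hasDerivAt_id s).mul hd).sqrt (mul_pos h0 h1).ne'
  have hl := (((hasDerivAt_id s).sqrt h0.ne').add (hd.sqrt h1.ne')).log
    (add_pos hu hv).ne'
  have hK : HasDerivAt KF _ s := hm.sub hl
  refine hK.congr_deriv ?_
  simp only [id, Pi.mul_apply, Pi.add_apply, Real.sqrt_mul h0.le]
  have eu : Real.sqrt s ^ 2 = s := Real.sq_sqrt h0.le
  have ev : Real.sqrt (s - 1) ^ 2 = s - 1 := Real.sq_sqrt h1.le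
  generalize Real.sqrt (s - 1) = v at *
  generalize Real.sqrt s = u at *
  have huv : 0 < u + v := add_pos hu hv
  have hl' : (1 / (2 * u) + 1 / (2 * v)) / (u + v) = 1 / (2 * (u * v)) := by
    field_simp
    ring
  rw [hl', ← sub_div, div_eq_div_iff (by positivity) hu.ne']
  linear_combination (-2 * u) * ev

lemma hasGradientAt_norm {x : R3} (hx : x ≠ 0) :
    HasGradientAt (fun y : R3 => ‖y‖) (‖x‖⁻¹ • x) x := by
  have hn : 0 < ‖x‖ := norm_pos_iff.2 hx
  have h := ((hasStrictFDerivAt_norm_sq x).hasFDerivAt).sqrt (by positivity)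
  simp only [Real.sqrt_sq (norm_nonneg _)] at h
  rw [hasGradientAt_iff_hasFDerivAt]
  refine h.congr_fderiv ?_
  ext y
  simp
  field_simp

lemma hasGradientAt_Sgen {q : ℝ} (hq : 0 < q) (ι : ℝ) {x a : R3} (hx : x ≠ 0) (ha : a ≠ 0)
    (hρ : 1 < rhoF q x a) :
    HasGradientAt (fun y => Sgen q ι y a)
      ((ι * (Real.sqrt (rhoF q x a - 1) / Real.sqrt (rhoF q x a)) / 2) •
          ((‖a‖ * ‖x‖⁻¹) • x + a) - (1 / 2 : ℝ) • ((‖a‖ * ‖x‖⁻¹) • x - a)) x := by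
  have hc : 0 < ‖a‖ := norm_pos_iff.2 ha
  have hN := (hasGradientAt_iff_hasFDerivAt.1 (hasGradientAt_norm hx)).mul_const ‖a‖
  have hI : HasFDerivAt (fun y : R3 => ⟪y, a⟫) (innerSL ℝ a) x := by
    have := (innerSL ℝ a).hasFDerivAt (x := x)
    simpa [real_inner_comm] using this
  have hR := (hN.add hI).const_mul (‖a‖ / (2 * q))
  have hK := ((hasDerivAt_KF hρ).comp_hasFDerivAt x hR).const_mul (ι * (q / ‖a‖))
  have hS := hK.sub ((hN.sub hI).mul_const (1 / 2))
  rw [hasGradientAt_iff_hasFDerivAt]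
  have hS' : HasFDerivAt (fun y => Sgen q ι y a) _ x := hS.congr_of_eventuallyEq
    (Filter.Eventually.of_forall fun y => by
      simp only [Sgen, div_eq_mul_inv, one_mul]; rfl)
  refine hS'.congr_fderiv ?_
  ext y
  simp
  field_simp

/-- On the region `ρ(x,a) > 1` the generating functions `S_ι` satisfy the
Hamilton–Jacobi (eikonal) identity `|∇ₓ S_ι(x,a)|² = |a|² − q/|x|`. -/
theorem generating_function_hamilton_jacobi (q : ℝ) (hq : 0 < q)
    (ι : ℝ) (hι : ι = 1 ∨ ι = -1)
    (x a : R3) (hx : x ≠ 0) (ha : a ≠ 0) (hρ : 1 < rhoF q x a) :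
    ‖gradient (fun y => Sgen q ι y a) x‖ ^ 2 = ‖a‖ ^ 2 - q / ‖x‖ := by
  have hn : 0 < ‖x‖ := norm_pos_iff.2 hx
  have hc : 0 < ‖a‖ := norm_pos_iff.2 ha
  rw [(hasGradientAt_Sgen hq ι hx ha hρ).gradient]
  have hk : (Real.sqrt (rhoF q x a - 1) / Real.sqrt (rhoF q x a)) ^ 2
      = (rhoF q x a - 1) / rhoF q x a := by
    rw [div_pow, Real.sq_sqrt (by linarith), Real.sq_sqrt (by linarith)]
  have hι2 : ι ^ 2 = 1 := by rcases hι with h | h <;> simp [h]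
  have hr : rhoF q x a * (2 * q) = ‖a‖ * (‖x‖ * ‖a‖ + ⟪x, a⟫) := by
    unfold rhoF
    field_simp
  generalize Real.sqrt (rhoF q x a - 1) / Real.sqrt (rhoF q x a) = k at *
  generalize rhoF q x a = s at *
  have hs : s ≠ 0 := by linarith
  rw [← real_inner_self_eq_norm_sq]
  simp only [inner_sub_left, inner_sub_right, inner_add_left, inner_add_right,
    real_inner_smul_left, real_inner_smul_right]
  rw [real_inner_comm x a, real_inner_self_eq_norm_sq x, real_inner_self_eq_norm_sq a]
  generalize ⟪x, a⟫ = p at *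
  generalize ‖x‖ = r at *
  generalize ‖a‖ = c at *
  have hk' : k ^ 2 * s = s - 1 := by rw [hk]; field_simp
  have hw : r⁻¹ * r = 1 := inv_mul_cancel₀ hn.ne'
  rw [div_eq_mul_inv q r]
  generalize r⁻¹ = w at *
  have h1 : c * (c + w * p) = 2 * s * q * w := by
    linear_combination (-w) * hr - c ^ 2 * hw
  have h2 : k ^ 2 * (c * (c + w * p)) = c * (c + w * p) - 2 * q * w := by
    rw [h1]
    linear_combination (2 * q * w) * hk'
  have hwr : w ^ 2 * r ^ 2 = 1 := by rw [← mul_pow, hw, one_pow]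
  linear_combination (1 / 2) * h2 + (k ^ 2 * (c * (c + w * p)) / 2) * hι2
    + (c ^ 2 * (ι * k - 1) ^ 2 / 4) * hwr
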